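/- Let n ≥ 2, let μ = f·Lⁿ ∈ 𝒲(ℝⁿ) be a PS measure, let E ⊆ ℝⁿ be a Lebesgue-measurable set, let v ∈ S^{n−1}, and assume μ(E Δ H_μ(E, v)) > 0. Then there exists η ∈ S^{n−1} with v·η > 0 such that μ(S_η(E) ∖ H_μ(E, v)) < μ(E ∖ H_μ(E, v)); in particular, μ(S_η(E) Δ H_μ(E, v)) < μ(E Δ H_μ(E, v)). -/

import Mathlib

/-!
The reduction is a Fubini argument for the finite, absolutely continuous measure `μ = f·Lⁿ`. Write
`H = H_μ(E, v)`.

On a line in a direction `η` with `v·η > 0`, both `H` and the symmetrized set `S_η(E)` are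
half-lines unbounded in the direction `η`, hence nested, and `S_η(E)` has the same line measure as
`E`. Therefore `S_η(E) \ H` has at most the line measure of `E \ H`, and strictly less as soon as
both `E \ H` and `H \ E` have positive measure on the line (`halfLine_diff_le`).

So it suffices to find `η` for which a set of lines of positive measure meets both `E \ H` and
`H \ E` in positive measure. Since `μ(H) = μ(E)`, both sets have positive `μ`-measure; let `A` and
`B` be their parts where `f > 0`. As `∫ |A ∩ (B - z)| dz = |A| |B| > 0`, there is `z` with
`|A ∩ (B - z)| > 0` (`exists_translate`). A point of this intersection lies outside `H` and is
moved into `H` by `z`, so `z·v > 0`; by Fubini the direction `η = z / |z|` works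
(`symmSet_reduction`).

The half-lines and half-spaces defined through lower bounds are first put in the closed form
`{t | ν [t, ∞) ≤ m}` (`mem_halfLine_iff`), which gives measurability of `S_η(E)` for Borel data; `f`
and `E` are replaced by Borel representatives, which changes `S_η(E)` by a null set
(`symmSet_ae_eq`).
-/

open MeasureTheory Set Filter
open scoped ENNReal RealInnerProductSpace Topology

noncomputable section

/-- Euclidean space ℝⁿ. -/
abbrev En (n : ℕ) := EuclideanSpace ℝ (Fin n)

/-- Divergence of a vector field on ℝⁿ. -/
noncomputable def dvg {n : ℕ} (φ : En n → En n) (x : En n) : ℝ :=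
  ∑ i : Fin n, fderiv ℝ φ x (EuclideanSpace.single i 1) i

/-- `f'` is the (weak) gradient of `f`, and both are locally integrable;
this encodes `f ∈ W^{1,1}_loc(ℝⁿ)` with weak gradient `∇f = f'`. -/
def HasWeakGrad {n : ℕ} (f : En n → ℝ) (f' : En n → En n) : Prop :=
  LocallyIntegrable f volume ∧ LocallyIntegrable f' volume ∧
    ∀ φ : En n → En n, ContDiff ℝ 1 φ → HasCompactSupport φ →
      (∫ x, f x * dvg φ x) = - ∫ x, ⟪φ x, f' x⟫

/-- Membership of `μ = f·Lⁿ` in the class `𝒲(ℝⁿ)`: the density `f` is non-negative,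
integrable and lies in `W^{1,1}_loc(ℝⁿ)` with weak gradient `f'`. -/
def MemW {n : ℕ} (f : En n → ℝ) (f' : En n → En n) : Prop :=
  (∀ x, 0 ≤ f x) ∧ Integrable f volume ∧ HasWeakGrad f f'

/-- Admissible test vector fields: `C¹`, compactly supported in `U`, sup-norm at most 1. -/
def IsTestField {n : ℕ} (U : Set (En n)) (φ : En n → En n) : Prop :=
  ContDiff ℝ 1 φ ∧ HasCompactSupport φ ∧ tsupport φ ⊆ U ∧ ∀ x, ‖φ x‖ ≤ 1

/-- The weighted variation `‖g‖_{BV_μ(U)}` (valued in `ℝ≥0∞`;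
membership in `BV_μ(U)` means that this quantity is finite). -/
noncomputable def bvVar {n : ℕ} (f : En n → ℝ) (f' : En n → En n) (U : Set (En n))
    (g : En n → ℝ) : ℝ≥0∞ :=
  ⨆ (φ : En n → En n) (_ : IsTestField U φ),
    ENNReal.ofReal (∫ x in U, g x * (f x * dvg φ x + ⟪φ x, f' x⟫))

/-- The weighted perimeter `Per_μ(E; U)`. -/
noncomputable def perim {n : ℕ} (f : En n → ℝ) (f' : En n → En n) (U : Set (En n))
    (E : Set (En n)) : ℝ≥0∞ :=
  bvVar f f' U (E.indicator fun _ => (1 : ℝ))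

/-- The measure `μ = f·Lⁿ`. -/
noncomputable def muM {n : ℕ} (f : En n → ℝ) : Measure (En n) :=
  volume.withDensity fun x => ENNReal.ofReal (f x)

/-- One-dimensional generalized Ehrhard symmetrization of `A ⊆ ℝ` in direction `v ∈ {−1,+1}`
with respect to a measure `ν` on `ℝ`: the largest half-line `{t : v·t ≥ c}` of `ν`-measure
`ν A` (with the conventions `∅`, `ℝ` when `c = ±∞`). -/
def ehrhard1D (ν : Measure ℝ) (v : ℝ) (A : Set ℝ) : Set ℝ :=
  {t | ∀ b : ℝ, (∀ c : ℝ, ν {y | c ≤ v * y} ≤ ν A → b ≤ c) → b ≤ v * t}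

/-- The weighted measure `f·H¹` on the fiber `{x + t·v : t ∈ ℝ}`, identified with `ℝ`. -/
noncomputable def fiberMeasure {n : ℕ} (f : En n → ℝ) (x v : En n) : Measure ℝ :=
  (volume : Measure ℝ).withDensity fun t => ENNReal.ofReal (f (x + t • v))

/-- Generalized `v`-Ehrhard symmetrization of `E ⊆ ℝⁿ` with respect to `μ = f·Lⁿ`:
on each fiber over `v^⊥` one replaces `E` by the largest half-line in direction `v`
of the same weighted measure. -/
def ehrhardSymm {n : ℕ} (f : En n → ℝ) (v : En n) (E : Set (En n)) : Set (En n) :=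
  {z | ⟪z, v⟫ ∈
      ehrhard1D (fiberMeasure f (z - ⟪z, v⟫ • v) v) 1
        {t | (z - ⟪z, v⟫ • v) + t • v ∈ E}}

/-- `μ = f·Lⁿ` is a perimeter symmetrization (PS) measure: generalized Ehrhard
symmetrization does not increase the weighted perimeter of sets of finite `μ`-perimeter. -/
def IsPSMeasure {n : ℕ} (f : En n → ℝ) (f' : En n → En n) : Prop :=
  ∀ v : En n, ‖v‖ = 1 → ∀ E : Set (En n), NullMeasurableSet E volume →
    perim f f' univ E < ⊤ →
      perim f f' univ (ehrhardSymm f v E) ≤ perim f f' univ E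

/-- The half-space `H(v, r) = {x : x·v ≥ r}`. -/
def halfSpace {n : ℕ} (v : En n) (r : ℝ) : Set (En n) := {x | r ≤ ⟪x, v⟫}

/-- `H_μ(E, v)`: the largest half-space in direction `v` with `μ`-measure `μ(E)`. -/
def halfSpaceOf {n : ℕ} (f : En n → ℝ) (E : Set (En n)) (v : En n) : Set (En n) :=
  {x | ∀ b : ℝ, (∀ c : ℝ, muM f (halfSpace v c) ≤ muM f E → b ≤ c) → b ≤ ⟪x, v⟫}

/-- `g'` is the weak derivative of `g : ℝ → ℝ` (so `g ∈ W^{1,1}_loc(ℝ)`). -/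
def HasWeakDeriv (g g' : ℝ → ℝ) : Prop :=
  LocallyIntegrable g volume ∧ LocallyIntegrable g' volume ∧
    ∀ φ : ℝ → ℝ, ContDiff ℝ 1 φ → HasCompactSupport φ →
      (∫ t, g t * deriv φ t) = - ∫ t, φ t * g' t

/-! ### Half-lines of prescribed measure -/

/-- The half-line `{t | ν [t, ∞) ≤ m}`; this is the closed form of the set defining
both `ehrhard1D` and `halfSpaceOf`. -/
def halfLine (ν : Measure ℝ) (m : ℝ≥0∞) : Set ℝ := {t | ν (Ici t) ≤ m}

lemma halfLine_upper {ν : Measure ℝ} {m : ℝ≥0∞} {s t : ℝ} (hs : s ∈ halfLine ν m) (h : s ≤ t) :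
    t ∈ halfLine ν m :=
  (measure_mono (Ici_subset_Ici.2 h)).trans hs

/-- The description by lower bounds used in the definitions agrees with the closed form. -/
lemma mem_halfLine_iff (ν : Measure ℝ) [NullSingletonClass ν] (m : ℝ≥0∞) (t : ℝ) :
    (∀ b : ℝ, (∀ c : ℝ, ν (Ici c) ≤ m → b ≤ c) → b ≤ t) ↔ t ∈ halfLine ν m := by
  refine ⟨fun h => ?_, fun h b hb => hb t h⟩
  by_contra hlt
  have hlt : m < ν (Ici t) := not_le.1 hlt
  have hU : Ioi t = ⋃ q : {q : ℚ // t < q}, Ici ((q : ℚ) : ℝ) := by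
    ext s
    simp only [mem_Ioi, mem_iUnion, mem_Ici, Subtype.exists, exists_prop]
    constructor
    · intro hs
      obtain ⟨q, h1, h2⟩ := exists_rat_btwn hs
      exact ⟨q, h1, h2.le⟩
    · rintro ⟨q, h1, h2⟩
      exact h1.trans_le h2
  have hdir : Directed (· ⊆ ·) fun q : {q : ℚ // t < q} => Ici ((q : ℚ) : ℝ) := by
    intro p q
    rcases le_total p q with h | h
    · exact ⟨p, subset_rfl, Ici_subset_Ici.2 (by exact_mod_cast h)⟩
    · exact ⟨q, Ici_subset_Ici.2 (by exact_mod_cast h), subset_rfl⟩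
  rw [← measure_congr (Ioi_ae_eq_Ici (μ := ν) (a := t)), hU, hdir.measure_iUnion, lt_iSup_iff] at hlt
  obtain ⟨⟨q, htq⟩, hq⟩ := hlt
  refine absurd (h q fun c hc => ?_) (not_le.2 htq)
  by_contra hcq
  exact absurd ((measure_mono (Ici_subset_Ici.2 (not_le.1 hcq).le)).trans hc) (not_le.2 hq)

lemma measurableSet_halfLine (ν : Measure ℝ) (m : ℝ≥0∞) : MeasurableSet (halfLine ν m) :=
  (OrdConnected.mk fun _ hx _ _ _ hz => halfLine_upper hx hz.1).measurableSet

lemma measure_halfLine_le (ν : Measure ℝ) [NullSingletonClass ν] (m : ℝ≥0∞) : ν (halfLine ν m) ≤ m := by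
  set U : Set ℝ := ⋃ q : {q : ℚ // (q : ℝ) ∈ halfLine ν m}, Ici ((q : ℚ) : ℝ) with hU
  have hdir : Directed (· ⊆ ·)
      fun q : {q : ℚ // (q : ℝ) ∈ halfLine ν m} => Ici ((q : ℚ) : ℝ) := by
    intro p q
    rcases le_total p q with h | h
    · exact ⟨p, subset_rfl, Ici_subset_Ici.2 (by exact_mod_cast h)⟩
    · exact ⟨q, Ici_subset_Ici.2 (by exact_mod_cast h), subset_rfl⟩
  -- Only the minimum of the half-line, if there is one, can be missed by rational endpoints.
  have hsub : (halfLine ν m \ U).Subsingleton := by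
    have key : ∀ s t, s ∈ halfLine ν m → t ∉ U → ¬ s < t := by
      intro s t hs ht hst
      obtain ⟨q, h1, h2⟩ := exists_rat_btwn hst
      exact ht (mem_iUnion.2 ⟨⟨q, halfLine_upper hs h1.le⟩, h2.le⟩)
    intro s hs t ht
    exact le_antisymm (not_lt.1 (key t s ht.1 hs.2)) (not_lt.1 (key s t hs.1 ht.2))
  calc ν (halfLine ν m) ≤ ν (U ∪ halfLine ν m \ U) := measure_mono (by
          rw [union_sdiff_self]; exact subset_union_right)
    _ ≤ ν U + ν (halfLine ν m \ U) := measure_union_le _ _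
    _ = ν U := by rw [hsub.measure_zero, add_zero]
    _ = ⨆ q : {q : ℚ // (q : ℝ) ∈ halfLine ν m}, ν (Ici ((q : ℚ) : ℝ)) := hdir.measure_iUnion
    _ ≤ m := iSup_le fun q => q.2

lemma measure_halfLine (ν : Measure ℝ) [NullSingletonClass ν] [IsFiniteMeasure ν] {m : ℝ≥0∞}
    (hm : m ≤ ν univ) : ν (halfLine ν m) = m := by
  refine le_antisymm (measure_halfLine_le ν m) ?_
  set U : Set ℝ := ⋂ q : {q : ℚ // (q : ℝ) ∉ halfLine ν m}, Ici ((q : ℚ) : ℝ) with hU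
  have hdir : Directed (· ⊇ ·)
      fun q : {q : ℚ // (q : ℝ) ∉ halfLine ν m} => Ici ((q : ℚ) : ℝ) := by
    intro p q
    rcases le_total p q with h | h
    · exact ⟨q, Ici_subset_Ici.2 (by exact_mod_cast h), subset_rfl⟩
    · exact ⟨p, subset_rfl, Ici_subset_Ici.2 (by exact_mod_cast h)⟩
  have hsub : (U \ halfLine ν m).Subsingleton := by
    have key : ∀ s t, s ∈ U → t ∉ halfLine ν m → ¬ s < t := by
      intro s t hs ht hst
      obtain ⟨q, h1, h2⟩ := exists_rat_btwn hst
      exact absurd (mem_iInter.1 hs ⟨q, fun hq => ht (halfLine_upper hq h2.le)⟩) (not_le.2 h1)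
    intro s hs t ht
    exact le_antisymm (not_lt.1 (key t s ht.1 hs.2)) (not_lt.1 (key s t hs.1 ht.2))
  calc m ≤ ν U := by
        rcases isEmpty_or_nonempty {q : ℚ // (q : ℝ) ∉ halfLine ν m} with h | h
        · rwa [hU, iInter_of_empty]
        · rw [hU, hdir.measure_iInter (fun q => measurableSet_Ici.nullMeasurableSet)
            ⟨h.some, measure_ne_top _ _⟩]
          exact le_iInf fun q => (not_le.1 q.2).le
    _ ≤ ν (halfLine ν m ∪ U \ halfLine ν m) := measure_mono (by
          rw [union_sdiff_self]; exact subset_union_right)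
    _ ≤ ν (halfLine ν m) + ν (U \ halfLine ν m) := measure_union_le _ _
    _ = ν (halfLine ν m) := by rw [hsub.measure_zero, add_zero]

/-- One-dimensional comparison. The half-lines `S = halfLine ν (ν A)` and `H` are nested: either
`S \ H` is empty, or `H ⊆ S` and replacing `A` by `S` removes at least the mass `ν (H \ A)` from
the outside of `H`. -/
lemma halfLine_diff_le (ν : Measure ℝ) [NullSingletonClass ν] [IsFiniteMeasure ν] {A H : Set ℝ}
    (hA : MeasurableSet A) (hH : MeasurableSet H) (hup : IsUpperSet H) :
    ν (halfLine ν (ν A) \ H) ≤ ν (A \ H) ∧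
      (ν (A \ H) ≠ 0 → ν (H \ A) ≠ 0 → ν (halfLine ν (ν A) \ H) < ν (A \ H)) := by
  set S := halfLine ν (ν A) with hS
  have hSup : IsUpperSet S := fun a b hab ha => halfLine_upper ha hab
  rcases hSup.total hup with h | h
  · rw [sdiff_eq_empty.2 h, measure_empty]
    exact ⟨zero_le, fun h1 _ => pos_iff_ne_zero.2 h1⟩
  · have e1 : ν (S \ H) + ν H = ν S := by
      have := measure_sdiff_add_inter (μ := ν) S hH
      rwa [inter_eq_self_of_subset_right h] at this
    have e2 : ν (H ∩ A) + ν (H \ A) = ν H := measure_inter_add_sdiff H hA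
    have e3 : ν (A ∩ H) + ν (A \ H) = ν A := measure_inter_add_sdiff A hH
    have e4 : ν S ≤ ν A := measure_halfLine_le ν _
    rw [inter_comm] at e3
    have e5 : ν (S \ H) + ν (H \ A) ≤ ν (A \ H) := by
      have : ν (H ∩ A) + (ν (S \ H) + ν (H \ A)) ≤ ν (H ∩ A) + ν (A \ H) := by
        rw [e3, add_left_comm, e2, e1]; exact e4
      exact (ENNReal.add_le_add_iff_left (measure_ne_top _ _)).1 this
    refine ⟨le_self_add.trans e5, fun _ h2 => lt_of_lt_of_le ?_ e5⟩
    exact ENNReal.lt_add_right (measure_ne_top _ _) h2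

/-! ### Splitting Lebesgue measure along a direction -/

/-- If `A` and `B` have positive measure, some translate of `B` meets `A` in positive measure. -/
lemma exists_translate {n : ℕ} {A B : Set (En n)} (hA : MeasurableSet A) (hB : MeasurableSet B)
    (hA0 : volume A ≠ 0) (hB0 : volume B ≠ 0) :
    ∃ z : En n, volume {y | y ∈ A ∧ y + z ∈ B} ≠ 0 := by
  have hmp := measurePreserving_prod_add_swap (volume : Measure (En n)) (volume : Measure (En n))
  have h := hmp.measure_preimage (hA.prod hB).nullMeasurableSet
  rw [Measure.prod_prod] at h
  by_contra! hcon
  have hz : ((volume : Measure (En n)).prod (volume : Measure (En n)))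
      ((fun z : En n × En n => (z.2, z.2 + z.1)) ⁻¹' A ×ˢ B) = 0 := by
    rw [Measure.measure_prod_null (hmp.measurable (hA.prod hB))]
    exact Eventually.of_forall hcon
  rw [hz] at h
  exact (mul_ne_zero hA0 hB0) h.symm

/-- The splitting `η^⊥ × ℝ ≃ ℝⁿ`, `(x, t) ↦ x + t η`, for a unit vector `η`. -/
def splitEquiv {n : ℕ} (η : En n) (hη : ‖η‖ = 1) : ((ℝ ∙ η)ᗮ × ℝ) ≃L[ℝ] En n :=
  LinearEquiv.toContinuousLinearEquiv
    { toFun := fun p => (p.1 : En n) + p.2 • η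
      map_add' := fun p q => by simp [add_smul]; abel
      map_smul' := fun c p => by simp [mul_smul]
      invFun := fun z => (⟨z - ⟪z, η⟫ • η, by
        rw [Submodule.mem_orthogonal_singleton_iff_inner_left, inner_sub_left, inner_smul_left,
          real_inner_self_eq_norm_sq, hη]; simp⟩, ⟪z, η⟫)
      left_inv := fun p => by
        have h1 : ⟪(p.1 : En n), η⟫ = 0 :=
          Submodule.mem_orthogonal_singleton_iff_inner_left.1 p.1.2
        have h2 : ⟪(p.1 : En n) + p.2 • η, η⟫ = p.2 := by
          rw [inner_add_left, inner_smul_left, real_inner_self_eq_norm_sq, hη, h1]; simp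
        ext <;> simp [h2]
      right_inv := fun z => by simp }

lemma splitEquiv_apply {n : ℕ} (η : En n) (hη : ‖η‖ = 1) (p : (ℝ ∙ η)ᗮ × ℝ) :
    splitEquiv η hη p = (p.1 : En n) + p.2 • η := rfl

lemma inner_splitEquiv {n : ℕ} (η : En n) (hη : ‖η‖ = 1) (p : (ℝ ∙ η)ᗮ × ℝ) :
    ⟪splitEquiv η hη p, η⟫ = p.2 := by
  have h1 : ⟪(p.1 : En n), η⟫ = 0 :=
    Submodule.mem_orthogonal_singleton_iff_inner_left.1 p.1.2
  rw [splitEquiv_apply, inner_add_left, inner_smul_left, real_inner_self_eq_norm_sq, hη, h1]; simp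

/-- Lebesgue measure splits as a product along `η`, up to a positive constant; the constant is left
implicit since only its positivity and finiteness matter. -/
lemma exists_volume_eq {n : ℕ} (η : En n) (hη : ‖η‖ = 1) :
    ∃ c : ℝ≥0∞, c ≠ 0 ∧ c ≠ ⊤ ∧ (volume : Measure (En n)) =
      c • ((Measure.addHaar : Measure (ℝ ∙ η)ᗮ).prod (volume : Measure ℝ)).map
        (splitEquiv η hη) := by
  have := (splitEquiv η hη).isAddHaarMeasure_map
    ((Measure.addHaar : Measure (ℝ ∙ η)ᗮ).prod (volume : Measure ℝ))
  refine ⟨_, ?_, ENNReal.coe_ne_top, Measure.isAddLeftInvariant_eq_smul _ _⟩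
  exact_mod_cast (Measure.addHaarScalarFactor_pos_of_isAddHaarMeasure _ _).ne.symm

/-! ### Symmetrization and Fubini -/

/-- The weighted measure on the line `x + ℝ η`, for an extended-valued density `F`. -/
def lineMeasure {n : ℕ} (F : En n → ℝ≥0∞) (η x : En n) : Measure ℝ :=
  (volume : Measure ℝ).withDensity fun t => F (x + t • η)

instance {n : ℕ} (F : En n → ℝ≥0∞) (η x : En n) : NullSingletonClass (lineMeasure F η x) := by
  unfold lineMeasure; infer_instance

/-- The orthogonal projection of `z` onto `η^⊥`, for a unit vector `η`. -/
def projPerp {n : ℕ} (η z : En n) : En n := z - ⟪z, η⟫ • η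

/-- The trace `{t | x + t η ∈ X}` of a set on the line `x + ℝ η`. -/
def trace {n : ℕ} (η : En n) (X : Set (En n)) (x : En n) : Set ℝ := {t | x + t • η ∈ X}

/-- Ehrhard symmetrization in direction `η` in closed form, for an extended-valued density. -/
def symmSet {n : ℕ} (F : En n → ℝ≥0∞) (η : En n) (E : Set (En n)) : Set (En n) :=
  {z | ⟪z, η⟫ ∈ halfLine (lineMeasure F η (projPerp η z))
    (lineMeasure F η (projPerp η z) (trace η E (projPerp η z)))}

lemma ehrhardSymm_eq {n : ℕ} (f : En n → ℝ) (η : En n) (E : Set (En n)) :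
    ehrhardSymm f η E = symmSet (fun x => ENNReal.ofReal (f x)) η E := by
  ext z
  unfold symmSet
  rw [mem_ofPred_eq, ← mem_halfLine_iff]
  simp only [ehrhardSymm, ehrhard1D, mem_ofPred_eq, one_mul]
  rfl

lemma projPerp_split {n : ℕ} (η : En n) (hη : ‖η‖ = 1) (p : (ℝ ∙ η)ᗮ × ℝ) :
    projPerp η (splitEquiv η hη p) = p.1 := by
  rw [projPerp, inner_splitEquiv, splitEquiv_apply, add_sub_cancel_right]

lemma measurable_projPerp {n : ℕ} (η : En n) : Measurable (projPerp η) := by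
  unfold projPerp
  fun_prop

lemma measurableSet_trace {n : ℕ} (η : En n) {X : Set (En n)} (hX : MeasurableSet X) (x : En n) :
    MeasurableSet (trace η X x) := by
  have : Measurable fun t : ℝ => x + t • η := by fun_prop
  exact this hX

lemma lineMeasure_trace {n : ℕ} (F : En n → ℝ≥0∞) (η : En n) {X : Set (En n)}
    (hX : MeasurableSet X) (x : En n) :
    lineMeasure F η x (trace η X x) = ∫⁻ t : ℝ, X.indicator F (x + t • η) := by
  rw [lineMeasure, withDensity_apply _ (measurableSet_trace η hX x),
    ← lintegral_indicator (measurableSet_trace η hX x)]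
  rfl

lemma measurable_lineMeasure_trace {n : ℕ} {F : En n → ℝ≥0∞} (hF : Measurable F) (η : En n)
    {X : Set (En n)} (hX : MeasurableSet X) :
    Measurable fun x => lineMeasure F η x (trace η X x) := by
  simp_rw [lineMeasure_trace F η hX]
  have : Measurable fun p : En n × ℝ => X.indicator F (p.1 + p.2 • η) :=
    (hF.indicator hX).comp (by fun_prop)
  exact this.lintegral_prod_right'

lemma measurableSet_symmSet {n : ℕ} {F : En n → ℝ≥0∞} (hF : Measurable F) (η : En n)
    {X : Set (En n)} (hX : MeasurableSet X) : MeasurableSet (symmSet F η X) := by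
  refine measurableSet_le ?_ ((measurable_lineMeasure_trace hF η hX).comp (measurable_projPerp η))
  have h1 : ∀ z : En n, lineMeasure F η (projPerp η z) (Ici ⟪z, η⟫) =
      ∫⁻ t, {p : En n × ℝ | ⟪p.1, η⟫ ≤ p.2}.indicator
        (fun p => F (projPerp η p.1 + p.2 • η)) (z, t) := by
    intro z
    rw [lineMeasure, withDensity_apply _ measurableSet_Ici, ← lintegral_indicator measurableSet_Ici]
    rfl
  simp_rw [h1]
  refine Measurable.lintegral_prod_right' (Measurable.indicator ?_ ?_)
  · have := measurable_projPerp η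
    exact hF.comp (by fun_prop)
  · exact measurableSet_le (by fun_prop) (by fun_prop)

/-- Fubini along the direction `η`. -/
lemma withDensity_eq_lintegral {n : ℕ} {F : En n → ℝ≥0∞} (hF : Measurable F) (η : En n)
    (hη : ‖η‖ = 1) {c : ℝ≥0∞} (hc : (volume : Measure (En n)) =
      c • ((Measure.addHaar : Measure (ℝ ∙ η)ᗮ).prod (volume : Measure ℝ)).map (splitEquiv η hη))
    {X : Set (En n)} (hX : MeasurableSet X) :
    volume.withDensity F X =
      c * ∫⁻ x : (ℝ ∙ η)ᗮ, lineMeasure F η x (trace η X x) ∂Measure.addHaar := by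
  have hT : Measurable (splitEquiv η hη) := (splitEquiv η hη).continuous.measurable
  rw [withDensity_apply _ hX, ← lintegral_indicator hX, hc, lintegral_smul_measure,
    lintegral_map (hF.indicator hX) hT]
  rw [lintegral_prod (fun p => X.indicator F (splitEquiv η hη p))
    ((hF.indicator hX).comp hT).aemeasurable]
  simp_rw [lineMeasure_trace F η hX, splitEquiv_apply, smul_eq_mul]

lemma ae_split {n : ℕ} (η : En n) (hη : ‖η‖ = 1) {c : ℝ≥0∞} (hc0 : c ≠ 0)
    (hc : (volume : Measure (En n)) =
      c • ((Measure.addHaar : Measure (ℝ ∙ η)ᗮ).prod (volume : Measure ℝ)).map (splitEquiv η hη))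
    {P : En n → Prop} : (∀ᵐ z, P z) ↔
      ∀ᵐ p ∂((Measure.addHaar : Measure (ℝ ∙ η)ᗮ).prod (volume : Measure ℝ)),
        P (splitEquiv η hη p) := by
  have hT := (splitEquiv η hη).toHomeomorph.measurableEmbedding
  rw [hc, Measure.ae_ennreal_smul_measure_iff hc0]
  exact hT.ae_map_iff

/-- Changing the density and the set on Lebesgue-null sets changes the symmetrization only on a
null set: almost every line is unaffected. -/
lemma symmSet_ae_eq {n : ℕ} {F G : En n → ℝ≥0∞} (hFG : F =ᵐ[volume] G) {E E' : Set (En n)}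
    (hE : E =ᵐ[volume] E') (η : En n) (hη : ‖η‖ = 1) :
    symmSet F η E =ᵐ[volume] symmSet G η E' := by
  obtain ⟨c, hc0, -, hc⟩ := exists_volume_eq η hη
  have h1 := Measure.ae_ae_of_ae_prod ((ae_split η hη hc0 hc).1 hFG)
  have h2 := Measure.ae_ae_of_ae_prod ((ae_split η hη hc0 hc).1 hE)
  refine (ae_split η hη hc0 hc).2 ?_
  filter_upwards [Measure.quasiMeasurePreserving_fst.ae h1,
    Measure.quasiMeasurePreserving_fst.ae h2] with p hp1 hp2
  have e1 : lineMeasure F η p.1 = lineMeasure G η p.1 := withDensity_congr_ae hp1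
  have e2 : lineMeasure G η p.1 (trace η E p.1) = lineMeasure G η p.1 (trace η E' p.1) :=
    measure_congr ((withDensity_absolutelyContinuous _ _).ae_le hp2)
  change (splitEquiv η hη p ∈ symmSet F η E) = (splitEquiv η hη p ∈ symmSet G η E')
  simp only [symmSet, mem_ofPred_eq, projPerp_split, e1, e2]

lemma trace_symmSet {n : ℕ} (F : En n → ℝ≥0∞) (η : En n) (hη : ‖η‖ = 1) (E : Set (En n))
    (x : (ℝ ∙ η)ᗮ) :
    trace η (symmSet F η E) x = halfLine (lineMeasure F η x) (lineMeasure F η x (trace η E x)) := by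
  ext t
  have h1 := projPerp_split η hη (x, t)
  have h2 := inner_splitEquiv η hη (x, t)
  rw [splitEquiv_apply] at h1 h2
  simp only [trace, symmSet, mem_ofPred_eq] at h1 h2 ⊢
  rw [h1, h2]

/-- If positively many points of `E \ H` are carried into `H \ E` by the translation by `d • η`,
both where the density is positive, then positively many lines in direction `η` see both sets, and
symmetrization in direction `η` strictly decreases the mass outside `H`. -/
lemma symmSet_reduction {n : ℕ} {F : En n → ℝ≥0∞} (hF : Measurable F)
    [IsFiniteMeasure (volume.withDensity F)] {E H : Set (En n)} (hE : MeasurableSet E)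
    (hH : MeasurableSet H) (η : En n) (hη : ‖η‖ = 1)
    (hup : ∀ z : En n, ∀ t : ℝ, 0 ≤ t → z ∈ H → z + t • η ∈ H) (d : ℝ)
    (hd : volume {y | y ∈ {z | F z ≠ 0} ∩ (E \ H) ∧ y + d • η ∈ {z | F z ≠ 0} ∩ (H \ E)} ≠ 0) :
    volume.withDensity F (symmSet F η E \ H) < volume.withDensity F (E \ H) ∧
      volume.withDensity F (symmSet F η E) = volume.withDensity F E := by
  obtain ⟨c, hc0, hct, hc⟩ := exists_volume_eq η hη
  have hS := measurableSet_symmSet hF η hE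
  have hmeas : ∀ {X : Set (En n)}, MeasurableSet X →
      Measurable fun x : (ℝ ∙ η)ᗮ => lineMeasure F η x (trace η X x) := fun hX =>
    (measurable_lineMeasure_trace hF η hX).comp measurable_subtype_coe
  have hfin : ∀ {X : Set (En n)}, MeasurableSet X →
      ∫⁻ x : (ℝ ∙ η)ᗮ, lineMeasure F η x (trace η X x) ∂Measure.addHaar ≠ ⊤ := by
    intro X hX h
    have := withDensity_eq_lintegral hF η hη hc hX
    rw [h, ENNReal.mul_top hc0] at this
    exact measure_ne_top _ _ this
  have hfinae : ∀ᵐ x : (ℝ ∙ η)ᗮ ∂Measure.addHaar, IsFiniteMeasure (lineMeasure F η x) := by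
    filter_upwards [ae_lt_top (hmeas MeasurableSet.univ) (hfin MeasurableSet.univ)] with x hx
    exact ⟨hx⟩
  have hupx : ∀ x : (ℝ ∙ η)ᗮ, IsUpperSet (trace η H x) := by
    intro x s t hst hs
    have := hup _ (t - s) (sub_nonneg.2 hst) hs
    rwa [add_assoc, ← add_smul, add_sub_cancel] at this
  have hkey : ∀ᵐ x : (ℝ ∙ η)ᗮ ∂Measure.addHaar, _ :=
    hfinae.mono fun x hx => halfLine_diff_le (lineMeasure F η x) (measurableSet_trace η hE x)
      (measurableSet_trace η hH x) (hupx x)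
  set C : Set (En n) :=
    {y | y ∈ {z | F z ≠ 0} ∩ (E \ H) ∧ y + d • η ∈ {z | F z ≠ 0} ∩ (H \ E)} with hC
  have hF0 : MeasurableSet {z | F z ≠ 0} := (hF (measurableSet_singleton 0)).compl
  have hCm : MeasurableSet C :=
    (hF0.inter (hE.diff hH)).inter
      ((by fun_prop : Measurable fun y : En n => y + d • η) (hF0.inter (hH.diff hE)))
  constructor
  · rw [withDensity_eq_lintegral hF η hη hc (hS.diff hH),
      withDensity_eq_lintegral hF η hη hc (hE.diff hH), ENNReal.mul_lt_mul_iff_right hc0 hct]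
    refine lintegral_strict_mono_of_ae_le_of_ae_lt_on (hmeas (hE.diff hH)).aemeasurable
      (hfin (hS.diff hH)) (s := {x | volume (trace η C x) ≠ 0}) ?_ ?_ ?_
    · filter_upwards [hkey] with x hx
      rw [← trace_symmSet F η hη] at hx
      exact hx.1
    · intro h0
      have h0 : ∀ᵐ x : (ℝ ∙ η)ᗮ ∂Measure.addHaar, volume (trace η C x) = 0 := by
        rw [ae_iff]; exact h0
      apply hd
      have := withDensity_eq_lintegral (F := 1) measurable_one η hη hc hCm
      rw [withDensity_one] at this
      rw [this, lintegral_congr_ae (g := 0)]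
      · simp
      · filter_upwards [h0] with x hx
        have : lineMeasure (1 : En n → ℝ≥0∞) η x = volume := withDensity_one
        rw [this, hx]; rfl
    · filter_upwards [hkey] with x hx hxC
      rw [← trace_symmSet F η hη] at hx
      have hFx : Measurable fun t : ℝ => F (x + t • η) := hF.comp (by fun_prop)
      refine hx.2 ?_ ?_
      · rw [lineMeasure, ne_eq, withDensity_apply_eq_zero hFx]
        exact fun h => hxC (measure_mono_null (fun t ht => ht.1) h)
      · rw [lineMeasure, ne_eq, withDensity_apply_eq_zero hFx]
        intro h
        -- The trace of `C` shifted by `d` lies in the trace of `H \ E`.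
        rw [← measure_preimage_add_right _ d] at h
        refine hxC (measure_mono_null (fun t ht => ?_) h)
        have h2 := ht.2
        rw [add_assoc, ← add_smul] at h2
        exact h2
  · rw [withDensity_eq_lintegral hF η hη hc hS, withDensity_eq_lintegral hF η hη hc hE]
    congr 1
    refine lintegral_congr_ae ?_
    filter_upwards [hfinae] with x hx
    rw [trace_symmSet F η hη]
    exact measure_halfLine _ (measure_mono (subset_univ _))

lemma volume_hyperplane {n : ℕ} (v : En n) (hv : ‖v‖ = 1) (r : ℝ) :
    volume {x : En n | ⟪x, v⟫ = r} = 0 := by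
  obtain ⟨c, hc0, -, hc⟩ := exists_volume_eq v hv
  have h : ∀ᵐ x : En n, ⟪x, v⟫ ≠ r := by
    rw [ae_split v hv hc0 hc]
    simp_rw [inner_splitEquiv]
    exact Measure.quasiMeasurePreserving_snd.ae (Measure.ae_ne volume r)
  simpa [ae_iff] using h

/-! ### Half-spaces and the conclusion -/

lemma halfSpaceOf_eq {n : ℕ} (f : En n → ℝ) (E : Set (En n)) (v : En n)
    [NullSingletonClass ((muM f).map fun x => ⟪x, v⟫)] :
    halfSpaceOf f E v =
      (fun x => ⟪x, v⟫) ⁻¹' halfLine ((muM f).map fun x => ⟪x, v⟫) (muM f E) := by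
  ext x
  rw [mem_preimage, ← mem_halfLine_iff]
  have h : ∀ c : ℝ, ((muM f).map fun x => ⟪x, v⟫) (Ici c) = muM f (halfSpace v c) := fun c =>
    Measure.map_apply (by fun_prop) measurableSet_Ici
  simp_rw [h]
  rfl

/-- For sets of equal measure the symmetric difference has twice the mass of either half. -/
lemma measure_symmDiff_lt {α : Type*} [MeasurableSpace α] (μ : Measure α) [IsFiniteMeasure μ]
    {S E H : Set α} (hS : MeasurableSet S) (hE : MeasurableSet E) (hH : MeasurableSet H)
    (h1 : μ S = μ E) (h2 : μ E = μ H) (h : μ (S \ H) < μ (E \ H)) :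
    μ ((S \ H) ∪ (H \ S)) < μ ((E \ H) ∪ (H \ E)) := by
  have e1 := measure_sdiff_symm hS.nullMeasurableSet hH.nullMeasurableSet (h1.trans h2)
    (measure_ne_top μ (S ∩ H))
  have e2 := measure_sdiff_symm hE.nullMeasurableSet hH.nullMeasurableSet h2
    (measure_ne_top μ (E ∩ H))
  rw [measure_union (disjoint_sdiff_sdiff) (hH.diff hS),
    measure_union (disjoint_sdiff_sdiff) (hH.diff hE), ← e1, ← e2]
  exact ENNReal.add_lt_add h h

/-- **Strict measure reduction.** If `E` differs from `H_μ(E, v)` in positive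
`μ`-measure, then some symmetrization in a direction `η` with `v·η > 0` strictly
reduces the mass outside `H_μ(E, v)` (and the symmetric difference). -/
theorem measure_reduction {n : ℕ} (hn : 2 ≤ n) (f : En n → ℝ) (f' : En n → En n)
    (hW : MemW f f') (hPS : IsPSMeasure f f')
    (E : Set (En n)) (hE : NullMeasurableSet E volume)
    (v : En n) (hv : ‖v‖ = 1)
    (hΔ : 0 < muM f ((E \ halfSpaceOf f E v) ∪ (halfSpaceOf f E v \ E))) :
    ∃ η : En n, ‖η‖ = 1 ∧ (0:ℝ) < ⟪v, η⟫ ∧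
      muM f (ehrhardSymm f η E \ halfSpaceOf f E v) < muM f (E \ halfSpaceOf f E v) ∧
      muM f ((ehrhardSymm f η E \ halfSpaceOf f E v) ∪ (halfSpaceOf f E v \ ehrhardSymm f η E))
        < muM f ((E \ halfSpaceOf f E v) ∪ (halfSpaceOf f E v \ E)) := by
  obtain ⟨-, hfi, -⟩ := hW
  -- Borel representatives of the density and of the set.
  have hofm : AEMeasurable (fun x => ENNReal.ofReal (f x)) volume :=
    hfi.aestronglyMeasurable.aemeasurable.ennreal_ofReal
  obtain ⟨F, hF, hfF⟩ := hofm
  obtain ⟨E', -, hE', hEE'⟩ := hE.exists_measurable_superset_ae_eq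
  have hμ : muM f = volume.withDensity F := withDensity_congr_ae hfF
  have hac : muM f ≪ volume := withDensity_absolutelyContinuous _ _
  have hfin : IsFiniteMeasure (muM f) := isFiniteMeasure_withDensity_ofReal hfi.2
  have hfin' : IsFiniteMeasure (volume.withDensity F) := hμ ▸ hfin
  have hinner : Measurable fun x : En n => ⟪x, v⟫ := by fun_prop
  have hns : NullSingletonClass ((muM f).map fun x => ⟪x, v⟫) := ⟨fun r => by
    rw [Measure.map_apply hinner (measurableSet_singleton r)]
    exact hac (volume_hyperplane v hv r)⟩
  have hHeq := halfSpaceOf_eq f E v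
  have hH : MeasurableSet (halfSpaceOf f E v) := by
    rw [hHeq]; exact hinner (measurableSet_halfLine _ _)
  have hHμ : muM f (halfSpaceOf f E v) = muM f E := by
    rw [hHeq, ← Measure.map_apply hinner (measurableSet_halfLine _ _)]
    refine measure_halfLine _ ?_
    rw [Measure.map_apply hinner MeasurableSet.univ]
    exact measure_mono (subset_univ _)
  have hHup : ∀ x y : En n, ⟪x, v⟫ ≤ ⟪y, v⟫ → x ∈ halfSpaceOf f E v → y ∈ halfSpaceOf f E v := by
    rw [hHeq]; exact fun x y h hx => halfLine_upper hx h
  generalize halfSpaceOf f E v = H at *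
  have hE1 : E =ᵐ[volume] E' := hEE'.symm
  have hE2 : E =ᵐ[muM f] E' := hac.ae_le hE1
  have hEH : muM f E' = muM f H := by rw [hHμ, measure_congr hE2]
  have hsymm : muM f (E' \ H) = muM f (H \ E') :=
    measure_sdiff_symm hE'.nullMeasurableSet hH.nullMeasurableSet hEH (measure_ne_top _ _)
  rw [measure_congr ((hE2.diff (ae_eq_refl H)).union ((ae_eq_refl H).diff hE2))] at hΔ ⊢
  rw [measure_congr (hE2.diff (ae_eq_refl H))]
  have hpos : muM f (E' \ H) ≠ 0 := by
    intro h0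
    refine hΔ.ne' (measure_union_null h0 ?_)
    rwa [← hsymm]
  have hposB : muM f (H \ E') ≠ 0 := hsymm ▸ hpos
  have hF0 : MeasurableSet {z | F z ≠ 0} := (hF (measurableSet_singleton 0)).compl
  rw [hμ, ne_eq, withDensity_apply_eq_zero hF] at hpos hposB
  obtain ⟨z, hz⟩ := exists_translate (hF0.inter (hE'.diff hH)) (hF0.inter (hH.diff hE')) hpos hposB
  -- A common point `y ∉ H`, `y + z ∈ H` forces `z · v > 0`.
  obtain ⟨y, hyA, hyB⟩ := nonempty_of_measure_ne_zero hz
  have hzv : 0 < ⟪z, v⟫ := by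
    by_contra hle
    refine hyA.2.2 (hHup _ _ ?_ hyB.2.1)
    rw [inner_add_left]
    linarith
  have hz0 : z ≠ 0 := by
    rintro rfl
    simp at hzv
  have hzn : 0 < ‖z‖ := norm_pos_iff.2 hz0
  set η : En n := ‖z‖⁻¹ • z with hηdef
  have hη : ‖η‖ = 1 := by
    rw [hηdef, norm_smul, norm_inv, norm_norm, inv_mul_cancel₀ hzn.ne']
  have hzη : ‖z‖ • η = z := by
    rw [hηdef, smul_smul, mul_inv_cancel₀ hzn.ne', one_smul]
  have hηv : 0 < ⟪η, v⟫ := by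
    rw [hηdef, real_inner_smul_left]
    positivity
  obtain ⟨hlt, heq⟩ := symmSet_reduction hF hE' hH η hη
    (fun x t ht hx => hHup x _ (by
      rw [inner_add_left, real_inner_smul_left]
      have := mul_nonneg ht hηv.le
      linarith) hx) ‖z‖ (by rw [hzη]; exact hz)
  have hS : ehrhardSymm f η E =ᵐ[muM f] symmSet F η E' := by
    rw [ehrhardSymm_eq]
    exact hac.ae_le (symmSet_ae_eq hfF hE1 η hη)
  refine ⟨η, hη, by rwa [real_inner_comm], ?_, ?_⟩
  · rw [measure_congr (hS.diff (ae_eq_refl H)), hμ]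
    exact hlt
  · rw [measure_congr ((hS.diff (ae_eq_refl H)).union ((ae_eq_refl H).diff hS))]
    rw [← hμ] at hlt heq
    exact measure_symmDiff_lt _ (measurableSet_symmSet hF η hE') hE' hH heq hEH hlt

end
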